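/- Let (X, Y) be a pair of real-valued random variables given by a probability measure μ on ℝ², with marginal quantile functions Q_X(u) = inf{x : F_X(x) ≥ u} and Q_Y(u) = inf{y : F_Y(y) ≥ u}. Suppose c : ℝ × ℝ → ℝ is measurable and −c satisfies the Monge condition, i.e., c is supermodular: c(x', y') + c(x, y) ≥ c(x, y') + c(x', y) for all x ≤ x' and y ≤ y'. If c(X, Y) and the functions u ↦ c(Q_X(u), Q_Y(u)) and u ↦ c(Q_X(u), Q_Y(1−u)) are integrable, then ∫₀¹ c(Q_X(u), Q_Y(1 − u)) du ≤ E[c(X, Y)] ≤ ∫₀¹ c(Q_X(u), Q_Y(u)) du; that is, for supermodular cost functions the roles of the comonotonic and countermonotonic bounds are reversed. -/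

import Mathlib

open MeasureTheory Set

/-!
The comonotonic coupling is optimal by Kantorovich duality. Along a monotone curve
`u ↦ (ξ u, η u)` a supermodular `c` admits potentials `f`, `g` with `c (x, y) ≤ f x + g y` on the
product of the projections of the curve, and with equality on the curve itself. Hence
`E[c (X, Y)] ≤ E[f X] + E[g Y]`, the right-hand side depends only on the marginals, and it is
attained by the coupling carried by the curve.

On finitely many points of the curve the potential is a telescoping sum of increments of `c`;
compactness of a product of intervals passes to the whole curve. Up to the section
`x ↦ c (x, η o)`, the potential `f` is monotone on either side of `ξ o`, so it is measurable. The
variables `f X` and `g Y` need not be integrable separately, so both are truncated before their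
expectations are split.

The lower bound is the upper bound for `(x, y) ↦ -c (x, -y)`, which is again supermodular.
-/

open ProbabilityTheory Filter Topology

/-- Supermodularity of a function on a product of two ordered sets: the negative of the function
satisfies the Monge condition. -/
def IsSupermodular {α β : Type*} [Preorder α] [Preorder β] (c : α × β → ℝ) : Prop :=
  ∀ x x' y y', x ≤ x' → y ≤ y' → c (x, y') + c (x', y) ≤ c (x', y') + c (x, y)

namespace IsSupermodular

section Preorder

variable {α β γ δ : Type*} [Preorder α] [Preorder β] [Preorder γ] [Preorder δ] {c : α × β → ℝ}

theorem comp_monotone (hc : IsSupermodular c) {ξ : γ → α} {η : δ → β} (hξ : Monotone ξ)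
    (hη : Monotone η) : IsSupermodular fun p : γ × δ => c (ξ p.1, η p.2) :=
  fun _ _ _ _ hx hy => hc _ _ _ _ (hξ hx) (hη hy)

theorem swap (hc : IsSupermodular c) : IsSupermodular fun p : β × α => c p.swap := by
  intro y y' x x' hy hx
  simpa only [Prod.swap_prod_mk, add_comm (c (x', y))] using hc x x' y y' hx hy

theorem neg_comp_antitone (hc : IsSupermodular c) {η : δ → β} (hη : Antitone η) :
    IsSupermodular fun p : α × δ => -c (p.1, η p.2) := by
  intro x x' y y' hx hy
  linarith [hc x x' (η y') (η y) hx (hη hy)]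

end Preorder

/-! ### Potentials on a monotone curve -/

section Potential

variable {ι : Type*} [LinearOrder ι] {K : ι × ι → ℝ}

theorem add_swap_le_add_diag (hK : IsSupermodular K) (s t : ι) :
    K (s, t) + K (t, s) ≤ K (s, s) + K (t, t) := by
  rcases le_total s t with h | h
  · linarith [hK s t s t h h]
  · linarith [hK t s t s h h]

theorem exists_potential_finset (hK : IsSupermodular K) (F : Finset ι) :
    ∃ α : ι → ℝ, ∀ s ∈ F, ∀ t ∈ F, K (s, t) - K (t, t) ≤ α s - α t := by
  induction F using Finset.induction_on_max with
  | empty => exact ⟨0, by simp⟩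
  | insert m F hm ih =>
    obtain ⟨α, hα⟩ := ih
    rcases F.eq_empty_or_nonempty with rfl | hF
    · exact ⟨0, by simp⟩
    set p := F.max' hF
    have hpF : p ∈ F := F.max'_mem hF
    have le_p : ∀ s ∈ F, s ≤ p := fun s hs => F.le_max' s hs
    -- The increment from the last point `p` to the new maximum `m` is the least one admissible.
    refine ⟨Function.update α m (α p + (K (m, p) - K (p, p))), ?_⟩
    have up : ∀ t ∈ F, K (m, t) - K (t, t) ≤ α p + (K (m, p) - K (p, p)) - α t := fun t ht => by
      linarith [hα p hpF t ht, hK p m t p (hm p hpF).le (le_p t ht)]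
    have down : ∀ s ∈ F, K (s, m) - K (m, m) ≤ α s - (α p + (K (m, p) - K (p, p))) :=
      fun s hs => by
        linarith [hα s hs p hpF, hK s m p m (hm s hs).le (hm p hpF).le]
    have update_eq : ∀ s ∈ F, Function.update α m (α p + (K (m, p) - K (p, p))) s = α s :=
      fun s hs => Function.update_of_ne (hm s hs).ne _ _
    simp only [Finset.forall_mem_insert, Function.update_self, sub_self, le_refl, true_and]
    refine ⟨fun t ht => ?_, fun s hs => ⟨?_, fun t ht => ?_⟩⟩
    · rw [update_eq t ht]
      exact up t ht
    · rw [update_eq s hs]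
      exact down s hs
    · rw [update_eq s hs, update_eq t ht]
      exact hα s hs t ht

theorem exists_potential_finset_mem_Icc (hK : IsSupermodular K) (o : ι) (F : Finset ι) :
    ∃ α : ι → ℝ, (∀ s, α s ∈ Icc (K (s, o) - K (o, o)) (K (s, s) - K (o, s))) ∧
      ∀ s ∈ F, ∀ t ∈ F, K (s, t) - K (t, t) ≤ α s - α t := by
  classical
  obtain ⟨α, hα⟩ := hK.exists_potential_finset (insert o F)
  simp only [Finset.forall_mem_insert] at hα
  obtain ⟨⟨-, from_o⟩, hα⟩ := hα
  refine ⟨fun s => if s ∈ F then α s - α o else K (s, o) - K (o, o), fun s => ?_,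
    fun s hs t ht => ?_⟩
  · by_cases hs : s ∈ F
    · simp only [hs, if_true]
      exact ⟨(hα s hs).1, by linarith [from_o s hs]⟩
    · simp only [hs, if_false]
      exact ⟨le_rfl, by linarith [hK.add_swap_le_add_diag s o]⟩
  · simp only [hs, ht, if_true]
    linarith [(hα s hs).2 t ht]

theorem exists_potential [Nonempty ι] (hK : IsSupermodular K) :
    ∃ α : ι → ℝ, ∀ s t, K (s, t) - K (t, t) ≤ α s - α t := by
  classical
  obtain ⟨o⟩ := ‹Nonempty ι›
  set box : Set (ι → ℝ) := univ.pi fun s => Icc (K (s, o) - K (o, o)) (K (s, s) - K (o, s))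
  set C : ι × ι → Set (ι → ℝ) := fun p => {α | K p - K (p.2, p.2) ≤ α p.1 - α p.2}
  have box_compact : IsCompact box := isCompact_univ_pi fun _ => isCompact_Icc
  have C_closed (p : ι × ι) : IsClosed (C p) := isClosed_le (by fun_prop) (by fun_prop)
  have finite_inter (u : Finset (ι × ι)) : (box ∩ ⋂ p ∈ u, C p).Nonempty := by
    obtain ⟨α, α_mem, hα⟩ :=
      hK.exists_potential_finset_mem_Icc o (u.image Prod.fst ∪ u.image Prod.snd)
    exact ⟨α, fun s _ => α_mem s, mem_iInter₂.2 fun p hp =>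
      hα p.1 (Finset.mem_union_left _ (Finset.mem_image_of_mem _ hp))
        p.2 (Finset.mem_union_right _ (Finset.mem_image_of_mem _ hp))⟩
  obtain ⟨α, -, hα⟩ := box_compact.inter_iInter_nonempty C C_closed finite_inter
  exact ⟨α, fun s t => mem_iInter.1 hα (s, t)⟩

end Potential

end IsSupermodular

theorem exists_measurable_comp_eq_of_le_imp_le {ι : Type*} {ξ α : ι → ℝ}
    (h : ∀ s t, ξ s ≤ ξ t → α s ≤ α t) : ∃ f : ℝ → ℝ, Measurable f ∧ ∀ s, f (ξ s) = α s := by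
  -- The supremum is taken in `EReal` since `α` may be unbounded.
  set φ : ℝ → EReal := fun x => ⨆ (s) (_ : ξ s ≤ x), (α s : EReal)
  have φ_mono : Monotone φ := fun x y hxy => biSup_mono fun _ hs => hs.trans hxy
  have φ_apply (t : ι) : φ (ξ t) = α t :=
    le_antisymm (iSup₂_le fun s hs => EReal.coe_le_coe (h s t hs))
      (le_iSup₂ (f := fun s (_ : ξ s ≤ ξ t) => (α s : EReal)) t le_rfl)
  exact ⟨fun x => (φ x).toReal, φ_mono.measurable.ereal_toReal, fun t => by
    simp only [φ_apply, EReal.toReal_coe]⟩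

namespace IsSupermodular

variable {ι : Type*} [LinearOrder ι] {c : ℝ × ℝ → ℝ} {ξ η : ι → ℝ}

theorem exists_measurable_comp_eq_potential [Nonempty ι] (hc : IsSupermodular c)
    (hc_meas : Measurable c) (hξ : Monotone ξ) (hη : Monotone η) {α : ι → ℝ}
    (hα : ∀ s t, c (ξ s, η t) - c (ξ t, η t) ≤ α s - α t) :
    ∃ f : ℝ → ℝ, Measurable f ∧ ∀ s, f (ξ s) = α s := by
  obtain ⟨o⟩ := ‹Nonempty ι›
  set h : ι → ℝ := fun s => α s - c (ξ s, η o)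
  have h_mono (p q : ι) (hp : o ≤ p) (hpq : ξ p ≤ ξ q) : h p ≤ h q := by
    simp only [h]
    linarith [hα q p, hc _ _ _ _ hpq (hη hp)]
  have h_anti (p q : ι) (hq : q ≤ o) (hpq : ξ p ≤ ξ q) : h q ≤ h p := by
    simp only [h]
    linarith [hα p q, hc _ _ _ _ hpq (hη hq)]
  obtain ⟨f₁, hf₁, hf₁_eq⟩ := exists_measurable_comp_eq_of_le_imp_le (ξ := ξ)
    (α := fun s => h (max s o)) fun s t hst => h_mono _ _ (le_max_right _ _) <| by
      rw [hξ.map_max, hξ.map_max]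
      exact max_le_max_right _ hst
  obtain ⟨f₂, hf₂, hf₂_eq⟩ := exists_measurable_comp_eq_of_le_imp_le (ξ := ξ)
    (α := fun s => -h (min s o)) fun s t hst => neg_le_neg <| h_anti _ _ (min_le_right _ _) <| by
      rw [hξ.map_min, hξ.map_min]
      exact min_le_min_right _ hst
  refine ⟨fun x => c (x, η o) + f₁ x - f₂ x - h o, by fun_prop, fun s => ?_⟩
  have h_split : h (max s o) + h (min s o) = h s + h o := by
    rcases le_total s o with hs | hs <;> simp only [hs, max_eq_left, max_eq_right, min_eq_left,
      min_eq_right, add_comm]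
  simp only [hf₁_eq, hf₂_eq]
  linarith [show h s = α s - c (ξ s, η o) from rfl]

theorem exists_measurable_dual (hc : IsSupermodular c) (hc_meas : Measurable c)
    (hξ : Monotone ξ) (hη : Monotone η) :
    ∃ f g : ℝ → ℝ, Measurable f ∧ Measurable g ∧
      (∀ s t, c (ξ s, η t) ≤ f (ξ s) + g (η t)) ∧ ∀ s, c (ξ s, η s) = f (ξ s) + g (η s) := by
  rcases isEmpty_or_nonempty ι with _ | _
  · exact ⟨0, 0, measurable_zero, measurable_zero, isEmptyElim, isEmptyElim⟩
  obtain ⟨α, hα⟩ := (hc.comp_monotone hξ hη).exists_potential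
  obtain ⟨f, hf, hfα⟩ := hc.exists_measurable_comp_eq_potential hc_meas hξ hη hα
  obtain ⟨g, hg, hgβ⟩ := hc.swap.exists_measurable_comp_eq_potential
    (hc_meas.comp measurable_swap) hη hξ (α := fun t => c (ξ t, η t) - α t) fun t s => by
      simp only [Prod.swap_prod_mk]
      linarith [hα s t]
  refine ⟨f, g, hf, hg, fun s t => ?_, fun s => ?_⟩
  · rw [hfα, hgβ]
    linarith [hα s t]
  · rw [hfα, hgβ]
    ring

end IsSupermodular

/-! ### Weak duality for sums that are not separately integrable -/

/-- Truncation of a real number to `[-n, n]`. Unlike `ProbabilityTheory.truncation`, it is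
monotone and `1`-Lipschitz, so that `clamp n s + clamp n t` lies between `0` and `s + t`. -/
def clamp (n : ℕ) (t : ℝ) : ℝ := max (-n) (min n t)

theorem measurable_clamp (n : ℕ) : Measurable (clamp n) := by
  unfold clamp
  fun_prop

theorem abs_clamp_le (n : ℕ) (t : ℝ) : |clamp n t| ≤ n := by
  have : (0 : ℝ) ≤ n := n.cast_nonneg
  exact abs_le.2 ⟨le_max_left _ _, max_le (by linarith) (min_le_left _ _)⟩

theorem clamp_eq_self {n : ℕ} {t : ℝ} (h : |t| ≤ n) : clamp n t = t := by
  rw [abs_le] at h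
  rw [clamp, min_eq_right h.2, max_eq_right h.1]

theorem clamp_add_clamp_mem_uIcc (n : ℕ) (s t : ℝ) :
    clamp n s + clamp n t ∈ uIcc 0 (s + t) := by
  have : (0 : ℝ) ≤ n := n.cast_nonneg
  simp only [clamp, uIcc, mem_Icc]
  grind

theorem tendsto_clamp (t : ℝ) : Tendsto (clamp · t) atTop (𝓝 t) := by
  refine tendsto_const_nhds.congr' ?_
  filter_upwards [tendsto_natCast_atTop_atTop.eventually_ge_atTop |t|] with n hn
  exact (clamp_eq_self hn).symm

section WeakDuality

variable {Ω Ω' : Type*} [MeasurableSpace Ω] [MeasurableSpace Ω'] {P : Measure Ω} {ρ : Measure Ω'}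

theorem integrable_clamp_comp [IsFiniteMeasure P] {A : Ω → ℝ} (hA : AEMeasurable A P) (n : ℕ) :
    Integrable (fun ω => clamp n (A ω)) P :=
  Integrable.of_bound ((measurable_clamp n).comp_aemeasurable hA).aestronglyMeasurable n
    (ae_of_all _ fun ω => abs_clamp_le n (A ω))

theorem integral_clamp_add_clamp_eq_of_identDistrib [IsFiniteMeasure P] {A B : Ω → ℝ}
    {A' B' : Ω' → ℝ} (hA : IdentDistrib A A' P ρ) (hB : IdentDistrib B B' P ρ) (n : ℕ) :
    ∫ ω, clamp n (A ω) + clamp n (B ω) ∂P = ∫ ω, clamp n (A' ω) + clamp n (B' ω) ∂ρ := by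
  have hA_clamp := hA.comp (measurable_clamp n)
  have hB_clamp := hB.comp (measurable_clamp n)
  have hA_int := integrable_clamp_comp hA.aemeasurable_fst n
  have hB_int := integrable_clamp_comp hB.aemeasurable_fst n
  have hA_int' : Integrable (fun ω => clamp n (A' ω)) ρ := hA_clamp.integrable_snd hA_int
  have hB_int' : Integrable (fun ω => clamp n (B' ω)) ρ := hB_clamp.integrable_snd hB_int
  rw [integral_add hA_int hB_int, integral_add hA_int' hB_int']
  exact congrArg₂ _ hA_clamp.integral_eq hB_clamp.integral_eq

theorem integral_le_integral_add_of_identDistrib [IsFiniteMeasure P] {A B Z : Ω → ℝ}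
    {A' B' : Ω' → ℝ} (hA : IdentDistrib A A' P ρ) (hB : IdentDistrib B B' P ρ)
    (hZ : Integrable Z P) (hZ_le : ∀ᵐ ω ∂P, Z ω ≤ A ω + B ω)
    (hAB' : Integrable (fun ω => A' ω + B' ω) ρ) :
    ∫ ω, Z ω ∂P ≤ ∫ ω, A' ω + B' ω ∂ρ := by
  have hAn (n : ℕ) := integrable_clamp_comp hA.aemeasurable_fst n
  have hBn (n : ℕ) := integrable_clamp_comp hB.aemeasurable_fst n
  have hABn (n : ℕ) := (hAn n).add (hBn n)
  -- `A + B` itself need not be `P`-integrable, but the minimum with `Z` is dominated by `|Z|`.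
  have lim_P : Tendsto (fun n => ∫ ω, min (Z ω) (clamp n (A ω) + clamp n (B ω)) ∂P) atTop
      (𝓝 (∫ ω, Z ω ∂P)) := by
    refine tendsto_integral_of_dominated_convergence (fun ω => |Z ω|)
      (fun n => (hZ.inf (hABn n)).aestronglyMeasurable) hZ.abs (fun n => ?_) ?_
    · filter_upwards [hZ_le] with ω hω
      have := clamp_add_clamp_mem_uIcc n (A ω) (B ω)
      simp only [uIcc, mem_Icc] at this
      rw [Real.norm_eq_abs]
      grind
    · filter_upwards [hZ_le] with ω hω
      simpa only [min_eq_left hω] using tendsto_const_nhds (x := Z ω) |>.min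
        ((tendsto_clamp (A ω)).add (tendsto_clamp (B ω)))
  have lim_ρ : Tendsto (fun n => ∫ ω, clamp n (A' ω) + clamp n (B' ω) ∂ρ) atTop
      (𝓝 (∫ ω, A' ω + B' ω ∂ρ)) := by
    refine tendsto_integral_of_dominated_convergence (fun ω => |A' ω + B' ω|)
      (fun n => ?_) hAB'.abs (fun n => ae_of_all _ fun ω => ?_)
      (ae_of_all _ fun ω => (tendsto_clamp (A' ω)).add (tendsto_clamp (B' ω)))
    · exact (((measurable_clamp n).comp_aemeasurable hA.aemeasurable_snd).add
        ((measurable_clamp n).comp_aemeasurable hB.aemeasurable_snd)).aestronglyMeasurable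
    · simpa using abs_sub_left_of_mem_uIcc (clamp_add_clamp_mem_uIcc n (A' ω) (B' ω))
  refine le_of_tendsto_of_tendsto' lim_P lim_ρ fun n => ?_
  rw [← integral_clamp_add_clamp_eq_of_identDistrib hA hB n]
  exact integral_mono (hZ.inf (hABn n)) (hABn n) fun ω => min_le_right _ _

end WeakDuality

theorem IsSupermodular.integral_le_of_comonotone {Ω T : Type*} [MeasurableSpace Ω]
    [LinearOrder T] [TopologicalSpace T] [OrderTopology T] [PolishSpace T] [MeasurableSpace T]
    [BorelSpace T] {P : Measure Ω} [IsFiniteMeasure P] {ρ : Measure T} {I : Set T}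
    {c : ℝ × ℝ → ℝ} {X Y : Ω → ℝ} {ξ η : T → ℝ}
    (hc : IsSupermodular c) (hc_meas : Measurable c)
    (hX : IdentDistrib X ξ P ρ) (hY : IdentDistrib Y η P ρ)
    (hI : MeasurableSet I) (hρ : ∀ᵐ u ∂ρ, u ∈ I) (hξ : MonotoneOn ξ I) (hη : MonotoneOn η I)
    (hP_int : Integrable (fun ω => c (X ω, Y ω)) P)
    (hρ_int : Integrable (fun u => c (ξ u, η u)) ρ) :
    ∫ ω, c (X ω, Y ω) ∂P ≤ ∫ u, c (ξ u, η u) ∂ρ := by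
  obtain ⟨f, g, hf, hg, c_le, c_eq⟩ := hc.exists_measurable_dual hc_meas
    (monotoneOn_iff_monotone.1 hξ) (monotoneOn_iff_monotone.1 hη)
  have c_eq_ae : (fun u => c (ξ u, η u)) =ᵐ[ρ] fun u => f (ξ u) + g (η u) := by
    filter_upwards [hρ] with u hu using c_eq ⟨u, hu⟩
  have X_mem : ∀ᵐ ω ∂P, X ω ∈ ξ '' I := hX.symm.ae_mem_snd (hI.image_of_monotoneOn hξ)
    (hρ.mono fun _ => mem_image_of_mem ξ)
  have Y_mem : ∀ᵐ ω ∂P, Y ω ∈ η '' I := hY.symm.ae_mem_snd (hI.image_of_monotoneOn hη)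
    (hρ.mono fun _ => mem_image_of_mem η)
  rw [integral_congr_ae c_eq_ae]
  refine integral_le_integral_add_of_identDistrib (hX.comp hf) (hY.comp hg) hP_int ?_
    (hρ_int.congr c_eq_ae)
  filter_upwards [X_mem, Y_mem] with ω ⟨s, hs, hsX⟩ ⟨t, ht, htY⟩
  simpa only [domRestrict_apply, Function.comp_apply, hsX, htY] using c_le ⟨s, hs⟩ ⟨t, ht⟩

/-! ### Quantile functions -/

/-- The quantile function of a law on the real line. It is meaningful on `(0, 1)` only: elsewhere
the infimum may be over an empty or unbounded set, where `sInf` is `0`. -/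
noncomputable def quantile (ν : Measure ℝ) (u : ℝ) : ℝ := sInf {x | u ≤ cdf ν x}

theorem quantile_le_iff (ν : Measure ℝ) {u : ℝ} (hu : u ∈ Ioo (0 : ℝ) 1) (x : ℝ) :
    quantile ν u ≤ x ↔ u ≤ cdf ν x := by
  have nonempty : {x | u ≤ cdf ν x}.Nonempty :=
    (((tendsto_cdf_atTop ν).eventually_const_lt hu.2).exists).imp fun _ => le_of_lt
  have bddBelow : BddBelow {x | u ≤ cdf ν x} := by
    obtain ⟨z, hz⟩ := ((tendsto_cdf_atBot ν).eventually_lt_const hu.1).exists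
    exact ⟨z, fun x hx => ((monotone_cdf ν).reflect_lt (hz.trans_le hx)).le⟩
  refine ⟨fun h => ?_, fun h => csInf_le bddBelow h⟩
  -- The infimum is attained because the distribution function is right-continuous.
  refine ge_of_tendsto (((cdf ν).right_continuous x).mono Ioi_subset_Ici_self).tendsto ?_
  filter_upwards [self_mem_nhdsWithin] with z hz
  obtain ⟨w, hw, hwz⟩ := exists_lt_of_csInf_lt nonempty (h.trans_lt hz)
  exact hw.trans (monotone_cdf ν hwz.le)

theorem monotoneOn_quantile (ν : Measure ℝ) : MonotoneOn (quantile ν) (Ioo 0 1) :=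
  fun _ hu _ hv huv =>
    (quantile_le_iff ν hu _).2 (huv.trans ((quantile_le_iff ν hv _).1 le_rfl))

theorem hasLaw_quantile (ν : Measure ℝ) [IsProbabilityMeasure ν] :
    HasLaw (quantile ν) ν (volume.restrict (Ioo 0 1)) := by
  have aemeas : AEMeasurable (quantile ν) (volume.restrict (Ioo 0 1)) :=
    aemeasurable_restrict_of_monotoneOn measurableSet_Ioo (monotoneOn_quantile ν)
  refine ⟨aemeas, (Measure.ext_of_Iic _ _ fun x => ?_).symm⟩
  have preimage_eq : quantile ν ⁻¹' Iic x ∩ Ioo 0 1 = Ioo 0 1 ∩ Iic (cdf ν x) := by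
    ext u
    rw [inter_comm]
    exact and_congr_right fun hu => quantile_le_iff ν hu x
  rw [Measure.map_apply_of_aemeasurable aemeas measurableSet_Iic,
    Measure.restrict_apply' measurableSet_Ioo, preimage_eq, ← ofReal_cdf]
  refine le_antisymm ?_ ?_
  · calc ENNReal.ofReal (cdf ν x) = volume (Ioo 0 (cdf ν x)) := by simp
      _ ≤ volume (Ioo 0 1 ∩ Iic (cdf ν x)) :=
        measure_mono fun u hu => ⟨⟨hu.1, hu.2.trans_le (cdf_le_one ν x)⟩, hu.2.le⟩
  · calc volume (Ioo 0 1 ∩ Iic (cdf ν x)) ≤ volume (Ioc 0 (cdf ν x)) :=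
          measure_mono fun u hu => ⟨hu.1.1, hu.2⟩
      _ = ENNReal.ofReal (cdf ν x) := by simp

theorem hasLaw_quantile_one_sub (ν : Measure ℝ) [IsProbabilityMeasure ν] :
    HasLaw (fun u => quantile ν (1 - u)) ν (volume.restrict (Ioo 0 1)) := by
  have reflection : MeasurePreserving (fun u : ℝ => 1 - u) (volume.restrict (Ioo 0 1))
      (volume.restrict (Ioo 0 1)) := by
    simpa using (Measure.measurePreserving_sub_left (volume : Measure ℝ) 1).restrict_preimage
      (measurableSet_Ioo (a := (0 : ℝ)) (b := 1))
  exact (hasLaw_quantile ν).comp reflection.hasLaw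

theorem monotoneOn_neg_quantile_one_sub (ν : Measure ℝ) :
    MonotoneOn (fun u => -quantile ν (1 - u)) (Ioo 0 1) := by
  have one_sub_mem {u : ℝ} (hu : u ∈ Ioo (0 : ℝ) 1) : 1 - u ∈ Ioo (0 : ℝ) 1 :=
    ⟨by linarith [hu.2], by linarith [hu.1]⟩
  exact fun u hu v hv huv => neg_le_neg <|
    monotoneOn_quantile ν (one_sub_mem hv) (one_sub_mem hu) (by linarith)

theorem eq_quantile_map {Ω : Type*} [MeasurableSpace Ω] {P : Measure Ω} [IsProbabilityMeasure P]
    {X : Ω → ℝ} (hX : AEMeasurable X P) {F Q : ℝ → ℝ}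
    (hF : ∀ x, F x = (P {ω | X ω ≤ x}).toReal) (hQ : ∀ u, Q u = sInf {x | u ≤ F x}) :
    Q = quantile (P.map X) := by
  have : IsProbabilityMeasure (P.map X) := Measure.isProbabilityMeasure_map hX
  have F_eq : F = cdf (P.map X) := by
    ext x
    rw [hF, cdf_eq_real, measureReal_def, Measure.map_apply_of_aemeasurable hX measurableSet_Iic]
    rfl
  ext u
  rw [hQ, F_eq, quantile]

namespace IsSupermodular

variable {Ω : Type*} [MeasurableSpace Ω] {P : Measure Ω} [IsProbabilityMeasure P]
  {c : ℝ × ℝ → ℝ} {X Y : Ω → ℝ}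

theorem integral_le_integral_quantile (hc : IsSupermodular c) (hc_meas : Measurable c)
    (hX : AEMeasurable X P) (hY : AEMeasurable Y P)
    (hint : Integrable (fun ω => c (X ω, Y ω)) P)
    (hint_co : IntegrableOn (fun u => c (quantile (P.map X) u, quantile (P.map Y) u)) (Ioo 0 1)) :
    ∫ ω, c (X ω, Y ω) ∂P ≤
      ∫ u in Ioo (0 : ℝ) 1, c (quantile (P.map X) u, quantile (P.map Y) u) := by
  have := Measure.isProbabilityMeasure_map hX
  have := Measure.isProbabilityMeasure_map hY
  exact hc.integral_le_of_comonotone hc_meas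
    (HasLaw.identDistrib ⟨hX, rfl⟩ (hasLaw_quantile _))
    (HasLaw.identDistrib ⟨hY, rfl⟩ (hasLaw_quantile _))
    measurableSet_Ioo (ae_restrict_mem measurableSet_Ioo)
    (monotoneOn_quantile _) (monotoneOn_quantile _) hint hint_co

theorem integral_quantile_one_sub_le_integral (hc : IsSupermodular c) (hc_meas : Measurable c)
    (hX : AEMeasurable X P) (hY : AEMeasurable Y P)
    (hint : Integrable (fun ω => c (X ω, Y ω)) P)
    (hint_counter : IntegrableOn
      (fun u => c (quantile (P.map X) u, quantile (P.map Y) (1 - u))) (Ioo 0 1)) :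
    ∫ u in Ioo (0 : ℝ) 1, c (quantile (P.map X) u, quantile (P.map Y) (1 - u)) ≤
      ∫ ω, c (X ω, Y ω) ∂P := by
  have := Measure.isProbabilityMeasure_map hX
  have := Measure.isProbabilityMeasure_map hY
  have reflected := (hc.neg_comp_antitone (η := Neg.neg) fun _ _ => neg_le_neg)
    |>.integral_le_of_comonotone (by fun_prop)
    (HasLaw.identDistrib ⟨hX, rfl⟩ (hasLaw_quantile _))
    ((HasLaw.identDistrib ⟨hY, rfl⟩ (hasLaw_quantile_one_sub _)).comp measurable_neg)
    measurableSet_Ioo (ae_restrict_mem measurableSet_Ioo)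
    (monotoneOn_quantile _) (monotoneOn_neg_quantile_one_sub _)
    (by simpa using hint.neg) (by simpa using Integrable.neg hint_counter)
  simpa [integral_neg] using reflected

end IsSupermodular

theorem expectation_bounds_supermodular_general
    (μ : Measure (ℝ × ℝ)) [IsProbabilityMeasure μ]
    (c : ℝ × ℝ → ℝ) (hc_meas : Measurable c)
    (hSuper : ∀ x x' y y' : ℝ, x ≤ x' → y ≤ y' →
      c (x, y') + c (x', y) ≤ c (x', y') + c (x, y))
    (FX FY QX QY : ℝ → ℝ)
    (hFX : ∀ x, FX x = (μ {p : ℝ × ℝ | p.1 ≤ x}).toReal)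
    (hFY : ∀ y, FY y = (μ {p : ℝ × ℝ | p.2 ≤ y}).toReal)
    (hQX : ∀ u, QX u = sInf {x : ℝ | u ≤ FX x})
    (hQY : ∀ u, QY u = sInf {y : ℝ | u ≤ FY y})
    (hint : Integrable c μ) :
    (IntegrableOn (fun u => c (QX u, QY (1 - u))) (Ioo (0:ℝ) 1) volume →
        ∫ u in Ioo (0:ℝ) 1, c (QX u, QY (1 - u)) ≤ ∫ p, c p ∂μ) ∧
      (IntegrableOn (fun u => c (QX u, QY u)) (Ioo (0:ℝ) 1) volume →
        ∫ p, c p ∂μ ≤ ∫ u in Ioo (0:ℝ) 1, c (QX u, QY u)) := by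
  have hc : IsSupermodular c := hSuper
  have hX : AEMeasurable Prod.fst μ := measurable_fst.aemeasurable
  have hY : AEMeasurable Prod.snd μ := measurable_snd.aemeasurable
  obtain rfl := eq_quantile_map hX hFX hQX
  obtain rfl := eq_quantile_map hY hFY hQY
  exact ⟨hc.integral_quantile_one_sub_le_integral hc_meas hX hY hint,
    hc.integral_le_integral_quantile hc_meas hX hY hint⟩

/-- For a supermodular cost `c` (i.e. `-c` satisfies the Monge condition), the roles of
the comonotonic and countermonotonic bounds are reversed: the countermonotonic integral
is a lower bound and the comonotonic integral is an upper bound on `E[c (X, Y)]`. -/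
theorem expectation_bounds_supermodular
    (μ : Measure (ℝ × ℝ)) [IsProbabilityMeasure μ]
    (c : ℝ × ℝ → ℝ) (hc_meas : Measurable c)
    (hSuper : ∀ x x' y y' : ℝ, x ≤ x' → y ≤ y' →
      c (x, y') + c (x', y) ≤ c (x', y') + c (x, y))
    (FX FY QX QY : ℝ → ℝ)
    (hFX : ∀ x, FX x = (μ {p : ℝ × ℝ | p.1 ≤ x}).toReal)
    (hFY : ∀ y, FY y = (μ {p : ℝ × ℝ | p.2 ≤ y}).toReal)
    (hQX : ∀ u, QX u = sInf {x : ℝ | u ≤ FX x})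
    (hQY : ∀ u, QY u = sInf {y : ℝ | u ≤ FY y})
    (hint : Integrable c μ)
    (hint_co : IntegrableOn (fun u => c (QX u, QY u)) (Ioo (0:ℝ) 1) volume)
    (hint_counter : IntegrableOn (fun u => c (QX u, QY (1 - u))) (Ioo (0:ℝ) 1) volume) :
    ∫ u in Ioo (0:ℝ) 1, c (QX u, QY (1 - u)) ≤ ∫ p, c p ∂μ ∧
      ∫ p, c p ∂μ ≤ ∫ u in Ioo (0:ℝ) 1, c (QX u, QY u) :=
  (expectation_bounds_supermodular_general μ c hc_meas hSuper FX FY QX QY hFX hFY hQX hQY hint).imp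
    (· hint_counter) (· hint_co)
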